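/- Let (Ω, 𝔉, ν) be an atomless probability space, let τ > 0, and let S ∈ L¹(ν) satisfy ∫ S dν = 0 and |∫_X S dν| ≤ (2τ)^{-1/2}·I(ν(X)) for every measurable set X ⊆ Ω. Then S is dominated in convex order by a centered Gaussian of variance 1/(2τ): for every convex function ψ : ℝ → ℝ such that ψ ∘ S is ν-integrable and ψ is integrable with respect to the centered Gaussian measure of variance 1/(2τ), one has ∫ ψ(S) dν ≤ ∫_ℝ ψ dγ_{1/(2τ)}. -/

import Mathlib

open Real MeasureTheory ProbabilityTheory

/-- The standard Gaussian density. -/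
noncomputable def gaussPdf (z : ℝ) : ℝ := (Real.sqrt (2 * Real.pi))⁻¹ * Real.exp (-z ^ 2 / 2)

/-- The standard normal CDF. -/
noncomputable def Phi (r : ℝ) : ℝ := ∫ z in Set.Iic r, gaussPdf z

/-- The inverse of the standard normal CDF. -/
noncomputable def PhiInv : ℝ → ℝ := Function.invFun Phi

/-- The Gaussian isoperimetric profile `I = φ ∘ Φ⁻¹`. -/
noncomputable def gaussI (a : ℝ) : ℝ := gaussPdf (PhiInv a)

open Set Filter Topology

lemma gp_eq (z : ℝ) : gaussianPDFReal 0 1 z = gaussPdf z := by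
  simp [gaussianPDFReal, gaussPdf]

lemma gp_int : Integrable gaussPdf := by
  have := integrable_gaussianPDFReal 0 1
  exact this.congr (ae_of_all _ gp_eq)

lemma Phi_cdf (r : ℝ) : Phi r = cdf (gaussianReal 0 1) r := by
  rw [cdf_eq_real, measureReal_def, gaussianReal_apply_eq_integral _ one_ne_zero]
  rw [ENNReal.toReal_ofReal]
  · simp only [gp_eq]; rfl
  · exact setIntegral_nonneg measurableSet_Iic fun x _ => gaussianPDFReal_nonneg _ _ _

lemma Phi_cont : Continuous Phi := by
  have : Phi = fun r => Phi 0 + ∫ z in (0:ℝ)..r, gaussPdf z := by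
    ext r
    have := intervalIntegral.integral_Iic_sub_Iic (gp_int.integrableOn (s := Iic (0:ℝ)))
      (gp_int.integrableOn (s := Iic r))
    rw [← this]; simp [Phi]
  rw [this]
  exact continuous_const.add
    (intervalIntegral.continuous_primitive (fun a b => gp_int.intervalIntegrable) 0)

lemma Phi_PhiInv {a : ℝ} (h0 : 0 < a) (h1 : a < 1) : Phi (PhiInv a) = a := by
  apply Function.invFun_eq
  have hb : Tendsto Phi atBot (𝓝 0) :=
    (tendsto_cdf_atBot (gaussianReal 0 1)).congr fun r => (Phi_cdf r).symm
  have ht : Tendsto Phi atTop (𝓝 1) :=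
    (tendsto_cdf_atTop (gaussianReal 0 1)).congr fun r => (Phi_cdf r).symm
  obtain ⟨x, hx⟩ := (hb.eventually (gt_mem_nhds h0)).exists
  obtain ⟨y, hy⟩ := (ht.eventually (lt_mem_nhds h1)).exists
  exact mem_range_of_exists_le_of_exists_ge Phi_cont ⟨x, hx.le⟩ ⟨y, hy.le⟩

lemma gp_deriv (z : ℝ) : HasDerivAt gaussPdf (-z * gaussPdf z) z := by
  unfold gaussPdf
  have h : HasDerivAt (fun z : ℝ => -z ^ 2 / 2) (-z) z := by
    have := ((hasDerivAt_pow 2 z).neg.div_const 2)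
    convert! this using 1
    simp; ring
  have := (h.exp).const_mul ((Real.sqrt (2 * Real.pi))⁻¹)
  convert! this using 1
  ring

lemma g1_int : Integrable (fun z : ℝ => z) (gaussianReal 0 1) := by
  have := (memLp_id_gaussianReal (μ := 0) (v := 1) 1)
  exact memLp_one_iff_integrable.mp this

lemma zgp_int : Integrable (fun z => -z * gaussPdf z) := by
  have := g1_int
  rw [gaussianReal_of_var_ne_zero _ one_ne_zero] at this
  have h2 := (integrable_withDensity_iff_integrable_smul' (measurable_gaussianPDF 0 1)
    (ae_of_all _ fun x => gaussianPDF_lt_top)).mp this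
  refine h2.neg.congr (ae_of_all _ fun x => ?_)
  simp [toReal_gaussianPDF, gp_eq, mul_comm]

lemma gp_tendsto : Tendsto gaussPdf atBot (𝓝 0) := by
  have h : Tendsto (fun z : ℝ => -z ^ 2 / 2) atBot atBot := by
    have : Tendsto (fun z : ℝ => z ^ 2) atBot atTop := by
      have h := (tendsto_pow_atTop (α := ℝ) two_ne_zero).comp tendsto_neg_atBot_atTop
      refine h.congr fun z => ?_
      simp
    exact (tendsto_neg_atTop_atBot.comp this).atBot_div_const two_pos
  have := (tendsto_exp_atBot.comp h).const_mul ((Real.sqrt (2 * Real.pi))⁻¹)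
  rw [mul_zero] at this
  exact this

lemma gauss_half (σ t r : ℝ) :
    ∫ z in Iic r, (-σ * z - t) ∂(gaussianReal 0 1) = σ * gaussPdf r - t * Phi r := by
  rw [← integral_indicator measurableSet_Iic,
    integral_gaussianReal_eq_integral_smul one_ne_zero]
  have : ∀ z, gaussianPDFReal 0 1 z • (Iic r).indicator (fun z => -σ * z - t) z =
      (Iic r).indicator (fun z => σ * (-z * gaussPdf z) - t * gaussPdf z) z := by
    intro z
    by_cases h : z ∈ Iic r
    · simp only [indicator_of_mem h, gp_eq, smul_eq_mul]; ring
    · simp only [indicator_of_notMem h, smul_zero]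
  simp only [this]
  rw [integral_indicator measurableSet_Iic,
    integral_sub (zgp_int.integrableOn.const_mul σ) (gp_int.integrableOn.const_mul t),
    integral_const_mul, integral_const_mul,
    integral_Iic_of_hasDerivAt_of_tendsto' (fun x _ => gp_deriv x) zgp_int.integrableOn gp_tendsto]
  simp [Phi]

lemma gauss_stop (σ t r : ℝ) (v : NNReal) (hv : (v : ℝ) = σ ^ 2) :
    σ * gaussPdf r - t * Phi r ≤ ∫ z, max (z - t) 0 ∂(gaussianReal 0 v) := by
  have hmap : gaussianReal 0 v = (gaussianReal 0 1).map (fun z => -σ * z) := by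
    rw [gaussianReal_map_const_mul]
    congr 1
    · simp
    · ext; simp [hv]
  rw [hmap, integral_map (by fun_prop) (by fun_prop), ← gauss_half]
  have hi : Integrable (fun z => -σ * z - t) (gaussianReal 0 1) :=
    (g1_int.const_mul _).sub (integrable_const _)
  have hp : Integrable (fun z => max (-σ * z - t) 0) (gaussianReal 0 1) := hi.pos_part
  calc _ ≤ ∫ z in Iic r, max (-σ * z - t) 0 ∂(gaussianReal 0 1) :=
        setIntegral_mono hi.integrableOn hp.integrableOn fun z => le_max_left _ _
    _ ≤ _ := setIntegral_le_integral hp (ae_of_all _ fun z => le_max_right _ _)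

noncomputable def kern (t x : ℝ) : ℝ := if 0 < t then max (x - t) 0 else max (t - x) 0

lemma convex_repr (ψ : ℝ → ℝ) (hψ : ConvexOn ℝ univ ψ) :
    ∃ F : StieltjesFunction ℝ, ∀ x, 0 ≤ ψ x - ψ 0 - F 0 * x ∧
      ENNReal.ofReal (ψ x - ψ 0 - F 0 * x) = ∫⁻ t, ENNReal.ofReal (kern t x) ∂F.measure := by
  have hmono : Monotone (fun x => derivWithin ψ (Ioi x) x) := by
    have := hψ.monotoneOn_rightDeriv
    rwa [interior_univ, monotoneOn_univ] at this
  have hcont : Continuous ψ := by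
    have := hψ.continuousOn_interior
    rwa [interior_univ, continuousOn_univ] at this
  set D := fun x => derivWithin ψ (Ioi x) x with hD
  let F := hmono.stieltjesFunction
  have hFD : ∀ᵐ x, D x = F x := by
    filter_upwards [hmono.countable_not_continuousAt.ae_notMem volume] with x hx
    simp only [mem_ofPred_eq, not_not] at hx
    rw [Monotone.stieltjesFunction_eq]
    exact (hx.continuousWithinAt.rightLim_eq).symm
  have hFi : ∀ a b, IntervalIntegrable F volume a b := fun a b => F.mono.intervalIntegrable
  have hftc : ∀ a b, ∫ s in a..b, F s = ψ b - ψ a := by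
    intro a b
    rw [← intervalIntegral.integral_eq_sub_of_hasDeriv_right (f' := D) hcont.continuousOn
      (fun x _ => hψ.hasDerivWithinAt_rightDeriv_of_mem_interior (by simp))
      hmono.intervalIntegrable]
    exact intervalIntegral.integral_congr_ae (hFD.mono fun x hx _ => hx.symm)
  refine ⟨F, fun x => ?_⟩
  have key : ∫⁻ t, ENNReal.ofReal (kern t x) ∂F.measure =
      ∫⁻ s, F.measure {t | (0 < t ∧ t ≤ s ∧ s < x) ∨ (x ≤ s ∧ s < t ∧ t ≤ 0)} := by
    have hm : MeasurableSet {p : ℝ × ℝ | (0 < p.1 ∧ p.1 ≤ p.2 ∧ p.2 < x) ∨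
        (x ≤ p.2 ∧ p.2 < p.1 ∧ p.1 ≤ 0)} := by
      apply MeasurableSet.union
      · exact (measurableSet_lt measurable_const measurable_fst).inter
          ((measurableSet_le measurable_fst measurable_snd).inter
            (measurableSet_lt measurable_snd measurable_const))
      · exact (measurableSet_le measurable_const measurable_snd).inter
          ((measurableSet_lt measurable_snd measurable_fst).inter
            (measurableSet_le measurable_fst measurable_const))
    have h1 := Measure.prod_apply (μ := F.measure) (ν := (volume : Measure ℝ)) hm
    have h2 := Measure.prod_apply_symm (μ := F.measure) (ν := (volume : Measure ℝ)) hm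
    rw [h1] at h2
    convert! h2 using 1
    apply lintegral_congr
    intro t
    unfold kern
    split_ifs with ht
    · have : (Prod.mk t ⁻¹' {p : ℝ × ℝ | (0 < p.1 ∧ p.1 ≤ p.2 ∧ p.2 < x) ∨
        (x ≤ p.2 ∧ p.2 < p.1 ∧ p.1 ≤ 0)}) = Ico t x := by
        ext s; simp [ht, not_le.mpr ht]
      rw [this, Real.volume_Ico]; simp [ENNReal.ofReal_max]
    · have : (Prod.mk t ⁻¹' {p : ℝ × ℝ | (0 < p.1 ∧ p.1 ≤ p.2 ∧ p.2 < x) ∨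
        (x ≤ p.2 ∧ p.2 < p.1 ∧ p.1 ≤ 0)}) = Ico x t := by
        ext s; simp [ht, not_lt.mp ht]
      rw [this, Real.volume_Ico]; simp [ENNReal.ofReal_max]
  rw [key]
  rcases le_total 0 x with hx | hx
  · have e : ψ x - ψ 0 - F 0 * x = ∫ s in (0:ℝ)..x, (F s - F 0) := by
      rw [intervalIntegral.integral_sub (hFi _ _) (by simp), hftc]
      simp [mul_comm]
    have hn : ∀ s ∈ Ioc 0 x, 0 ≤ F s - F 0 := fun s hs => sub_nonneg.mpr (F.mono hs.1.le)
    refine ⟨?_, ?_⟩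
    · rw [e, intervalIntegral.integral_of_le hx]
      exact setIntegral_nonneg measurableSet_Ioc hn
    · rw [e, intervalIntegral.integral_of_le hx, ofReal_integral_eq_lintegral_ofReal
        (((hFi 0 x).sub (by simp)).1) ((ae_restrict_iff' measurableSet_Ioc).mpr (ae_of_all _ hn)),
        restrict_Ico_eq_restrict_Ioc.symm, ← lintegral_indicator measurableSet_Ico]
      apply lintegral_congr
      intro s
      by_cases hs : s ∈ Ico 0 x
      · rw [indicator_of_mem hs, ← F.measure_Ioc]
        congr 1
        ext t; simp only [mem_Ioc, mem_ofPred_eq, mem_Ico] at *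
        constructor
        · rintro ⟨h1, h2⟩; exact Or.inl ⟨h1, h2, hs.2⟩
        · rintro (h | h)
          · exact ⟨h.1, h.2.1⟩
          · linarith [hs.2]
      · rw [indicator_of_notMem hs]
        symm
        convert! measure_empty (μ := F.measure)
        ext t; simp only [mem_ofPred_eq, mem_Ico, mem_empty_iff_false, iff_false] at *
        rintro (h | h)
        · exact hs ⟨by linarith, h.2.2⟩
        · linarith
  · have e : ψ x - ψ 0 - F 0 * x = ∫ s in x..0, (F 0 - F s) := by
      rw [intervalIntegral.integral_sub (by simp) (hFi _ _), hftc]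
      simp; ring
    have hn : ∀ s ∈ Ioc x 0, 0 ≤ F 0 - F s := fun s hs => sub_nonneg.mpr (F.mono hs.2)
    refine ⟨?_, ?_⟩
    · rw [e, intervalIntegral.integral_of_le hx]
      exact setIntegral_nonneg measurableSet_Ioc hn
    · rw [e, intervalIntegral.integral_of_le hx, ofReal_integral_eq_lintegral_ofReal
        ((IntervalIntegrable.sub (by simp) (hFi x 0)).1)
          ((ae_restrict_iff' measurableSet_Ioc).mpr (ae_of_all _ hn)),
        restrict_Ico_eq_restrict_Ioc.symm, ← lintegral_indicator measurableSet_Ico]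
      apply lintegral_congr
      intro s
      by_cases hs : s ∈ Ico x 0
      · rw [indicator_of_mem hs, ← F.measure_Ioc]
        congr 1
        ext t; simp only [mem_Ioc, mem_ofPred_eq, mem_Ico] at *
        constructor
        · rintro ⟨h1, h2⟩; exact Or.inr ⟨hs.1, h1, h2⟩
        · rintro (h | h)
          · linarith [hs.2]
          · exact ⟨h.2.1, h.2.2⟩
      · rw [indicator_of_notMem hs]
        symm
        convert! measure_empty (μ := F.measure)
        ext t; simp only [mem_ofPred_eq, mem_Ico, mem_empty_iff_false, iff_false] at *
        rintro (h | h)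
        · linarith
        · exact hs ⟨h.1, by linarith⟩

lemma kern_meas : Measurable (fun p : ℝ × ℝ => ENNReal.ofReal (kern p.1 p.2)) := by
  unfold kern
  apply Measurable.ennreal_ofReal
  exact Measurable.ite (measurableSet_lt measurable_const measurable_fst)
    (by fun_prop) (by fun_prop)

lemma convex_order (P Q : Measure ℝ) [IsProbabilityMeasure P] [IsProbabilityMeasure Q]
    (hP : Integrable (fun x => x) P) (hQ : Integrable (fun x => x) Q)
    (hPQ : ∫ x, x ∂P = ∫ x, x ∂Q)
    (hst : ∀ t, ∫ x, max (x - t) 0 ∂P ≤ ∫ x, max (x - t) 0 ∂Q)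
    (ψ : ℝ → ℝ) (hψ : ConvexOn ℝ univ ψ) (h1 : Integrable ψ P) (h2 : Integrable ψ Q) :
    ∫ x, ψ x ∂P ≤ ∫ x, ψ x ∂Q := by
  obtain ⟨F, hF⟩ := convex_repr ψ hψ
  have ip : ∀ (ρ : Measure ℝ) [IsProbabilityMeasure ρ], Integrable (fun x => x) ρ → ∀ t : ℝ,
      Integrable (fun x => max (x - t) 0) ρ := fun ρ _ h t =>
    (h.sub (integrable_const t)).pos_part
  have im : ∀ (ρ : Measure ℝ) [IsProbabilityMeasure ρ], Integrable (fun x => x) ρ → ∀ t : ℝ,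
      Integrable (fun x => max (t - x) 0) ρ := fun ρ _ h t =>
    ((integrable_const t).sub h).pos_part
  have em : ∀ (ρ : Measure ℝ) [IsProbabilityMeasure ρ], Integrable (fun x => x) ρ → ∀ t : ℝ,
      ∫ x, max (t - x) 0 ∂ρ = ∫ x, max (x - t) 0 ∂ρ - ((∫ x, x ∂ρ) - t) := by
    intro ρ _ h t
    have : ∀ x, max (t - x) 0 = max (x - t) 0 - (x - t) := by
      intro x
      rcases le_total x t with h | h
      · rw [max_eq_left (by linarith), max_eq_right (by linarith)]; ring
      · rw [max_eq_right (by linarith), max_eq_left (by linarith)]; ring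
    simp only [this]
    have hs : Integrable (fun x => x - t) ρ := h.sub (integrable_const t)
    rw [integral_sub (ip ρ h t) hs, integral_sub h (integrable_const t)]
    simp
  have ik : ∀ (ρ : Measure ℝ) [IsProbabilityMeasure ρ], Integrable (fun x => x) ρ → ∀ t : ℝ,
      Integrable (fun x => kern t x) ρ := by
    intro ρ _ h t
    unfold kern
    split_ifs
    · exact ip ρ h t
    · exact im ρ h t
  have kn : ∀ t x, 0 ≤ kern t x := by
    intro t x; unfold kern; split_ifs <;> exact le_max_right _ _
  have hk : ∀ t, ∫⁻ x, ENNReal.ofReal (kern t x) ∂P ≤ ∫⁻ x, ENNReal.ofReal (kern t x) ∂Q := by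
    intro t
    rw [← ofReal_integral_eq_lintegral_ofReal (ik P hP t) (ae_of_all _ (kn t)),
      ← ofReal_integral_eq_lintegral_ofReal (ik Q hQ t) (ae_of_all _ (kn t))]
    apply ENNReal.ofReal_le_ofReal
    unfold kern
    split_ifs
    · exact hst t
    · rw [em P hP, em Q hQ, hPQ]; linarith [hst t]
  set g := fun x => ψ x - ψ 0 - F 0 * x with hg
  have ig : ∀ (ρ : Measure ℝ) [IsProbabilityMeasure ρ], Integrable (fun x => x) ρ →
      Integrable ψ ρ → Integrable g ρ := fun ρ _ h h' =>
    (h'.sub (integrable_const _)).sub (h.const_mul _)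
  have eg : ∀ (ρ : Measure ℝ) [IsProbabilityMeasure ρ], Integrable (fun x => x) ρ →
      Integrable ψ ρ → ∫ x, g x ∂ρ = ∫ x, ψ x ∂ρ - ψ 0 - F 0 * ∫ x, x ∂ρ := by
    intro ρ _ h h'
    have hs : Integrable (fun x => ψ x - ψ 0) ρ := h'.sub (integrable_const _)
    have hm : Integrable (fun x => F 0 * x) ρ := h.const_mul _
    simp only [hg]
    rw [integral_sub hs hm,
      integral_sub h' (integrable_const _), integral_const_mul]
    simp
  have sw : ∀ (ρ : Measure ℝ) [IsProbabilityMeasure ρ], ∫⁻ x, ENNReal.ofReal (g x) ∂ρ =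
      ∫⁻ t, ∫⁻ x, ENNReal.ofReal (kern t x) ∂ρ ∂F.measure := by
    intro ρ _
    rw [lintegral_lintegral_swap kern_meas.aemeasurable]
    exact lintegral_congr fun x => (hF x).2
  have hfin : ∫ x, g x ∂P ≤ ∫ x, g x ∂Q := by
    rw [← ENNReal.ofReal_le_ofReal_iff (integral_nonneg fun x => (hF x).1),
      ofReal_integral_eq_lintegral_ofReal (ig P hP h1) (ae_of_all _ fun x => (hF x).1),
      ofReal_integral_eq_lintegral_ofReal (ig Q hQ h2) (ae_of_all _ fun x => (hF x).1),
      sw P, sw Q]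
    exact lintegral_mono hk
  rw [eg P hP h1, eg Q hQ h2, hPQ] at hfin
  linarith

lemma stop_loss {Ω : Type*} [MeasurableSpace Ω] (ν : Measure Ω) [IsProbabilityMeasure ν]
    (σ : ℝ) (v : NNReal) (hv : (v : ℝ) = σ ^ 2)
    (S : Ω → ℝ) (hSm : Measurable S) (hS : Integrable S ν) (hmean : ∫ x, S x ∂ν = 0)
    (hset : ∀ X : Set Ω, MeasurableSet X →
      |∫ x in X, S x ∂ν| ≤ σ * gaussI (ν X).toReal) (t : ℝ) :
    ∫ x, max (S x - t) 0 ∂ν ≤ ∫ z, max (z - t) 0 ∂(gaussianReal 0 v) := by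
  have hX : MeasurableSet {x | t < S x} := measurableSet_lt measurable_const hSm
  set X := {x | t < S x} with hXd
  have e : ∫ x, max (S x - t) 0 ∂ν = ∫ x in X, S x ∂ν - t * (ν X).toReal := by
    have : ∀ x, max (S x - t) 0 = X.indicator (fun x => S x - t) x := by
      intro x
      by_cases h : t < S x
      · rw [indicator_of_mem (by exact h), max_eq_left (by linarith)]
      · rw [indicator_of_notMem (by exact h), max_eq_right (by linarith)]
    simp only [this]
    rw [integral_indicator hX, integral_sub hS.integrableOn (integrable_const _)]
    simp [measureReal_def, mul_comm]
  have hg : Integrable (fun z : ℝ => z) (gaussianReal 0 v) :=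
    memLp_one_iff_integrable.mp (memLp_id_gaussianReal (μ := 0) (v := v) 1)
  rw [e]
  rcases eq_or_ne (ν X) 0 with h0 | h0
  · rw [Measure.restrict_eq_zero.mpr h0, h0]
    simp only [integral_zero_measure, ENNReal.toReal_zero, mul_zero, sub_zero]
    exact integral_nonneg fun z => le_max_right _ _
  rcases eq_or_ne (ν X) 1 with h1 | h1
  · have hr : ν.restrict X = ν :=
      Measure.restrict_eq_self_of_ae_mem (mem_ae_iff.mpr ((prob_compl_eq_zero_iff hX).mpr h1))
    rw [hr, hmean, h1]
    calc _ = ∫ z, (z - t) ∂(gaussianReal 0 v) := by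
          rw [integral_sub hg (integrable_const _), integral_id_gaussianReal]; simp
      _ ≤ _ := integral_mono (hg.sub (integrable_const _)) (hg.sub (integrable_const _)).pos_part
          fun z => le_max_left _ _
  · have ha0 : 0 < (ν X).toReal := ENNReal.toReal_pos h0 (measure_ne_top _ _)
    have ha1 : (ν X).toReal < 1 := by
      rw [← ENNReal.toReal_one]
      exact (ENNReal.toReal_lt_toReal (measure_ne_top _ _) ENNReal.one_ne_top).mpr
        (lt_of_le_of_ne prob_le_one h1)
    have := gauss_stop σ t (PhiInv (ν X).toReal) v hv
    rw [Phi_PhiInv ha0 ha1] at this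
    have h3 := (le_abs_self _).trans (hset X hX)
    unfold gaussI at h3
    linarith

/-- Convex-order domination: on an atomless probability space, if `S ∈ L¹(ν)` has mean
zero and `|∫_X S dν| ≤ (2τ)^{-1/2} I(ν(X))` for every measurable `X`, then
`∫ ψ(S) dν ≤ ∫ ψ dγ_{1/(2τ)}` for every convex `ψ` for which both sides make sense. -/
theorem stmt16 {Ω : Type*} [MeasurableSpace Ω] (ν : Measure Ω) [IsProbabilityMeasure ν]
    (hatomless : ∀ s : Set Ω, MeasurableSet s → 0 < ν s →
      ∃ t, t ⊆ s ∧ MeasurableSet t ∧ 0 < ν t ∧ ν t < ν s)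
    (τ : ℝ) (hτ : 0 < τ) (S : Ω → ℝ) (hS : Integrable S ν)
    (hmean : ∫ x, S x ∂ν = 0)
    (hset : ∀ X : Set Ω, MeasurableSet X →
      |∫ x in X, S x ∂ν| ≤ (Real.sqrt (2 * τ))⁻¹ * gaussI (ν X).toReal)
    (ψ : ℝ → ℝ) (hψ : ConvexOn ℝ Set.univ ψ)
    (hint1 : Integrable (fun x => ψ (S x)) ν)
    (hint2 : Integrable ψ (gaussianReal 0 ((1 / (2 * τ)).toNNReal))) :
    ∫ x, ψ (S x) ∂ν ≤ ∫ z, ψ z ∂(gaussianReal 0 ((1 / (2 * τ)).toNNReal)) := by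
  set v : NNReal := (1 / (2 * τ)).toNNReal with hvd
  have hv : (v : ℝ) = ((Real.sqrt (2 * τ))⁻¹) ^ 2 := by
    rw [hvd, Real.coe_toNNReal _ (by positivity), inv_pow, Real.sq_sqrt (by positivity), one_div]
  obtain ⟨S', hS'm, hSS'⟩ : ∃ S' : Ω → ℝ, Measurable S' ∧ S =ᵐ[ν] S' :=
    ⟨_, hS.aemeasurable.measurable_mk, hS.aemeasurable.ae_eq_mk⟩
  have hS' : Integrable S' ν := hS.congr hSS'
  have hm' : ∫ x, S' x ∂ν = 0 := by rw [← hmean]; exact (integral_congr_ae hSS').symm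
  have hset' : ∀ X : Set Ω, MeasurableSet X →
      |∫ x in X, S' x ∂ν| ≤ (Real.sqrt (2 * τ))⁻¹ * gaussI (ν X).toReal := by
    intro X hX
    rw [← integral_congr_ae (ae_restrict_of_ae hSS')]
    exact hset X hX
  have hst := stop_loss ν _ v hv S' hS'm hS' hm' hset'
  have hψS : (fun x => ψ (S x)) =ᵐ[ν] fun x => ψ (S' x) := hSS'.fun_comp ψ
  have hcont : Continuous ψ := by
    have := hψ.continuousOn_interior
    rwa [interior_univ, continuousOn_univ] at this
  have hg : Integrable (fun z : ℝ => z) (gaussianReal 0 v) :=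
    memLp_one_iff_integrable.mp (memLp_id_gaussianReal (μ := 0) (v := v) 1)
  haveI : IsProbabilityMeasure (ν.map S') := Measure.isProbabilityMeasure_map hS'm.aemeasurable
  rw [integral_congr_ae hψS]
  have := convex_order (ν.map S') (gaussianReal 0 v)
    ((integrable_map_measure (by fun_prop) hS'm.aemeasurable).mpr hS') hg
    (by rw [integral_map hS'm.aemeasurable (by fun_prop), hm', integral_id_gaussianReal])
    (fun t => by
      rw [integral_map hS'm.aemeasurable (by fun_prop)]
      exact hst t) ψ hψ
    ((integrable_map_measure hcont.aestronglyMeasurable hS'm.aemeasurable).mpr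
      (hint1.congr hψS)) hint2
  rwa [integral_map hS'm.aemeasurable hcont.aestronglyMeasurable] at this
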